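/- Let G = (V, E) be a weighted digraph, let G₀ = (V, E₀) be its subgraph with E₀ ⊆ E and the same weights on shared edges, and let F = E ∖ E₀. Let U ⊆ V contain both the tail and the head of every edge of F. Let C ≥ 1 be a real number and let H be a weighted digraph on vertex set U such that dist_H(u, v) ≤ C · dist_{G₀}(u, v) for all u, v ∈ U, and dist_H(u, v) ≤ w(e) for every edge e = uv ∈ F. Then for all s, t ∈ U and every path P = s → t in G, dist_H(s, t) ≤ C · w(P); consequently dist_H(s, t) ≤ C · dist_G(s, t). -/

import Mathlib

/-!
For a fixed target `t ∈ U`, let `φ x` be the infimum of `C · dist_{G₀}(x, y) + dist_H(y, t)` over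
`y ∈ U`; it agrees with `dist_H(x, t)` for `x ∈ U`. Along every edge `ab` of `G` we have
`φ a ≤ C · w(ab) + φ b`: for an edge of `G₀` by the triangle inequality in `G₀`, and for an edge of
`F` because `a, b ∈ U` and `dist_H(a, b) ≤ w(ab) ≤ C · w(ab)`. Summing along a walk `P` from
`s ∈ U` to `t` gives `dist_H(s, t) = φ s ≤ C · w(P) + φ t = C · w(P)`.
-/

open scoped ENNReal NNReal

/-- `IsWalk E u l v` : the list of vertices `l` is a path (walk) from `u` to `v`
in the digraph with edge set `E`; consecutive vertices must form edges.
A single-vertex list `[u]` is the empty path from `u` to `u`. -/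
def IsWalk {V : Type*} (E : Set (V × V)) (u : V) (l : List V) (v : V) : Prop :=
  l ≠ [] ∧ l.head? = some u ∧ l.getLast? = some v ∧
    l.Chain' (fun a b => (a, b) ∈ E)

/-- The weight (in `[0,∞]`) of a walk given by its vertex list: the sum of the
(nonnegative) weights of the consecutive pairs. -/
noncomputable def walkWeightE {V : Type*} (w : V × V → ℝ≥0) (l : List V) : ℝ≥0∞ :=
  ((l.zip l.tail).map (fun e => (w e : ℝ≥0∞))).sum

/-- The distance from `u` to `v`: the infimum of the weights of all paths
`u → v`; equals `∞` if there is no such path. -/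
noncomputable def eDist {V : Type*} (E : Set (V × V)) (w : V × V → ℝ≥0)
    (u v : V) : ℝ≥0∞ :=
  ⨅ (l : List V) (_ : IsWalk E u l v), walkWeightE w l

section Walk

variable {V : Type*} {E : Set (V × V)} {u v a b : V} {l : List V}

theorem isWalk_iff :
    IsWalk E u l v ↔ l.head? = some u ∧ l.getLast? = some v ∧ l.IsChain fun a b => (a, b) ∈ E :=
  ⟨fun h => h.2, fun h => ⟨List.ne_nil_of_mem (List.mem_of_mem_head? h.1), h⟩⟩

theorem isWalk_singleton_iff : IsWalk E u [a] v ↔ a = u ∧ a = v := by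
  simp [isWalk_iff]

theorem isWalk_cons_cons_iff :
    IsWalk E u (a :: b :: l) v ↔ a = u ∧ (a, b) ∈ E ∧ IsWalk E b (b :: l) v := by
  simp only [isWalk_iff, List.head?_cons, Option.some.injEq, List.getLast?_cons_cons,
    List.isChain_cons_cons, true_and]
  tauto

theorem isWalk_singleton (E : Set (V × V)) (u : V) : IsWalk E u [u] u :=
  isWalk_singleton_iff.2 ⟨rfl, rfl⟩

theorem IsWalk.exists_eq_cons (h : IsWalk E u l v) : ∃ l', l = u :: l' :=
  List.head?_eq_some_iff.1 (isWalk_iff.1 h).1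

theorem IsWalk.cons (hab : (a, b) ∈ E) (h : IsWalk E b l v) : IsWalk E a (a :: l) v := by
  obtain ⟨l, rfl⟩ := h.exists_eq_cons
  exact isWalk_cons_cons_iff.2 ⟨rfl, hab, h⟩

theorem IsWalk.induction {motive : ∀ u l, IsWalk E u l v → Prop}
    (singleton : motive v [v] (isWalk_singleton E v))
    (cons : ∀ a b l (hab : (a, b) ∈ E) (h : IsWalk E b l v),
      motive b l h → motive a (a :: l) (h.cons hab))
    (h : IsWalk E u l v) : motive u l h := by
  induction l generalizing u with
  | nil => exact absurd rfl h.1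
  | cons a l ih =>
    cases l with
    | nil =>
      obtain ⟨rfl, rfl⟩ := isWalk_singleton_iff.1 h
      exact singleton
    | cons b l =>
      obtain ⟨rfl, hab, hb⟩ := isWalk_cons_cons_iff.1 h
      exact cons a b (b :: l) hab hb (ih hb)

theorem walkWeightE_singleton (w : V × V → ℝ≥0) (a : V) : walkWeightE w [a] = 0 := by
  simp [walkWeightE]

theorem IsWalk.walkWeightE_cons (h : IsWalk E b l v) (w : V × V → ℝ≥0) (a : V) :
    walkWeightE w (a :: l) = w (a, b) + walkWeightE w l := by
  obtain ⟨l, rfl⟩ := h.exists_eq_cons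
  simp [walkWeightE]

theorem IsWalk.le_mul_walkWeightE_add {w : V × V → ℝ≥0} {c : ℝ≥0∞} {φ : V → ℝ≥0∞}
    (hφ : ∀ a b, (a, b) ∈ E → φ a ≤ c * w (a, b) + φ b) (h : IsWalk E u l v) :
    φ u ≤ c * walkWeightE w l + φ v := by
  induction h using IsWalk.induction with
  | singleton => exact le_add_self
  | cons a b l hab hb ih =>
    calc φ a ≤ c * w (a, b) + φ b := hφ a b hab
      _ ≤ c * w (a, b) + (c * walkWeightE w l + φ v) := by gcongr
      _ = c * walkWeightE w (a :: l) + φ v := by rw [hb.walkWeightE_cons w a, mul_add, add_assoc]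

end Walk

section Dist

variable {V : Type*} {E : Set (V × V)} {w : V × V → ℝ≥0}

theorem IsWalk.eDist_le_walkWeightE {u v : V} {l : List V} (h : IsWalk E u l v) (w : V × V → ℝ≥0) :
    eDist E w u v ≤ walkWeightE w l :=
  iInf₂_le l h

theorem eDist_self (E : Set (V × V)) (w : V × V → ℝ≥0) (u : V) : eDist E w u u = 0 :=
  nonpos_iff_eq_zero.1 <|
    ((isWalk_singleton E u).eDist_le_walkWeightE w).trans_eq (walkWeightE_singleton w u)

theorem eDist_le_weight_add_eDist {a b : V} (hab : (a, b) ∈ E) (v : V) :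
    eDist E w a v ≤ w (a, b) + eDist E w b v := by
  have hwalk (l : List V) (hl : IsWalk E b l v) : eDist E w a v ≤ w (a, b) + walkWeightE w l :=
    ((hl.cons hab).eDist_le_walkWeightE w).trans_eq (hl.walkWeightE_cons w a)
  calc eDist E w a v ≤ ⨅ (l : List V) (_ : IsWalk E b l v), w (a, b) + walkWeightE w l :=
        le_iInf₂ hwalk
    _ = w (a, b) + eDist E w b v := by simp only [eDist, ENNReal.add_iInf]

theorem le_mul_eDist_add {c : ℝ≥0∞} (hc₀ : c ≠ 0) (hc : c ≠ ∞) {φ : V → ℝ≥0∞}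
    (hφ : ∀ a b, (a, b) ∈ E → φ a ≤ c * w (a, b) + φ b) (u v : V) :
    φ u ≤ c * eDist E w u v + φ v := by
  simp only [eDist, ENNReal.mul_iInf_of_ne hc₀ hc, ENNReal.iInf_add]
  exact le_iInf₂ fun l hl => hl.le_mul_walkWeightE_add hφ

theorem eDist_triangle (E : Set (V × V)) (w : V × V → ℝ≥0) (x y z : V) :
    eDist E w x z ≤ eDist E w x y + eDist E w y z := by
  have hstep (a b : V) (hab : (a, b) ∈ E) : eDist E w a z ≤ 1 * w (a, b) + eDist E w b z := by
    rw [one_mul]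
    exact eDist_le_weight_add_eDist hab z
  simpa only [one_mul] using le_mul_eDist_add one_ne_zero ENNReal.one_ne_top hstep x y

end Dist

section SwitchCost

variable {V : Type*} {d₀ d : V → V → ℝ≥0∞} {U : Set V} {a b t x : V}

/-- The least cost of reaching `t` from `x` when moves are charged by `d₀` up to some vertex of `U`
and by `d` from there on (`∞` if `U` is empty). As a function of `x` it is the potential that is
compared along the edges of a walk. -/
noncomputable def switchCost (d₀ d : V → V → ℝ≥0∞) (U : Set V) (t x : V) : ℝ≥0∞ :=
  ⨅ y ∈ U, d₀ x y + d y t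

theorem switchCost_le_of_mem (hself : d₀ x x = 0) (hx : x ∈ U) : switchCost d₀ d U t x ≤ d x t :=
  (iInf₂_le x hx).trans_eq (by rw [hself, zero_add])

theorem le_switchCost_of_mem (htri : ∀ x y z, d x z ≤ d x y + d y z)
    (hle : ∀ u ∈ U, ∀ v ∈ U, d u v ≤ d₀ u v) (hx : x ∈ U) : d x t ≤ switchCost d₀ d U t x :=
  le_iInf₂ fun y hy => (htri x y t).trans (by gcongr; exact hle x hx y hy)

theorem switchCost_le_add {r : ℝ≥0∞} (h : ∀ y ∈ U, d₀ a y ≤ r + d₀ b y) :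
    switchCost d₀ d U t a ≤ r + switchCost d₀ d U t b := by
  simp only [switchCost, ENNReal.add_iInf, ← add_assoc]
  exact iInf₂_mono fun y hy => by gcongr; exact h y hy

theorem switchCost_le_add_of_mem (hself : d₀ a a = 0) (htri : ∀ x y z, d x z ≤ d x y + d y z)
    (hle : ∀ u ∈ U, ∀ v ∈ U, d u v ≤ d₀ u v) (ha : a ∈ U) (hb : b ∈ U) :
    switchCost d₀ d U t a ≤ d a b + switchCost d₀ d U t b :=
  calc switchCost d₀ d U t a ≤ d a t := switchCost_le_of_mem hself ha
    _ ≤ d a b + d b t := htri a b t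
    _ ≤ d a b + switchCost d₀ d U t b := by gcongr; exact le_switchCost_of_mem htri hle hb

end SwitchCost

theorem dense_apsp_graph_accuracy_general {V : Type*} {E₀ F : Set (V × V)} {w : V × V → ℝ≥0}
    {U : Set V} (hU : ∀ e ∈ F, e.1 ∈ U ∧ e.2 ∈ U) {c : ℝ≥0∞} (hc₀ : c ≠ 0) (hc : c ≠ ∞)
    {EH : Set (V × V)} {wH : V × V → ℝ≥0}
    (hH₀ : ∀ u ∈ U, ∀ v ∈ U, eDist EH wH u v ≤ c * eDist E₀ w u v)
    (hHF : ∀ e ∈ F, eDist EH wH e.1 e.2 ≤ c * w e) {s t : V} (hs : s ∈ U) (ht : t ∈ U) :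
    (∀ l : List V, IsWalk (E₀ ∪ F) s l t → eDist EH wH s t ≤ c * walkWeightE w l) ∧
      eDist EH wH s t ≤ c * eDist (E₀ ∪ F) w s t := by
  have htri := eDist_triangle EH wH
  have hself (x : V) : c * eDist E₀ w x x = 0 := by rw [eDist_self, mul_zero]
  let φ := switchCost (fun x y => c * eDist E₀ w x y) (eDist EH wH) U t
  have hφ (a b : V) : (a, b) ∈ E₀ ∪ F → φ a ≤ c * w (a, b) + φ b := by
    rintro (hab | hab)
    · refine switchCost_le_add fun y _ => ?_
      rw [← mul_add]
      gcongr
      exact eDist_le_weight_add_eDist hab y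
    · obtain ⟨ha, hb⟩ := hU _ hab
      exact (switchCost_le_add_of_mem (hself a) htri hH₀ ha hb).trans (by gcongr; exact hHF _ hab)
  have hφs : eDist EH wH s t ≤ φ s := le_switchCost_of_mem htri hH₀ hs
  have hφt : φ t = 0 :=
    nonpos_iff_eq_zero.1 <| (switchCost_le_of_mem (hself t) ht).trans_eq (eDist_self EH wH t)
  refine ⟨fun l hl => hφs.trans ?_, hφs.trans ?_⟩
  · simpa only [hφt, add_zero] using hl.le_mul_walkWeightE_add hφ
  · simpa only [hφt, add_zero] using le_mul_eDist_add hc₀ hc hφ s t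

/- `G = (V, E)` with weights `w`; `G₀ = (V, E₀)` is a subgraph (`E₀ ⊆ E`, same
weights); `F = E ∖ E₀` are the newly inserted edges, all with endpoints in `U`;
`H = (U, EH)` (with weights `wH`) is an auxiliary graph on the vertex set `U`
approximating distances of `G₀` within factor `C` and dominated by the weights
of the inserted edges `F`. -/
theorem dense_apsp_graph_accuracy {V : Type*} [Fintype V]
    (E E₀ : Set (V × V)) (hE₀ : E₀ ⊆ E) (w : V × V → ℝ≥0)
    (U : Set V) (hU : ∀ e ∈ E, e ∉ E₀ → e.1 ∈ U ∧ e.2 ∈ U)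
    (C : ℝ) (hC : 1 ≤ C)
    (EH : Set (V × V)) (hEH : ∀ e ∈ EH, e.1 ∈ U ∧ e.2 ∈ U) (wH : V × V → ℝ≥0)
    (hH₀ : ∀ u ∈ U, ∀ v ∈ U,
      eDist EH wH u v ≤ ENNReal.ofReal C * eDist E₀ w u v)
    (hHF : ∀ e ∈ E, e ∉ E₀ → eDist EH wH e.1 e.2 ≤ (w e : ℝ≥0∞)) :
    ∀ s ∈ U, ∀ t ∈ U,
      (∀ l : List V, IsWalk E s l t →
        eDist EH wH s t ≤ ENNReal.ofReal C * walkWeightE w l) ∧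
      eDist EH wH s t ≤ ENNReal.ofReal C * eDist E w s t := by
  intro s hs t ht
  have hc : 1 ≤ ENNReal.ofReal C := ENNReal.one_le_ofReal.2 hC
  rw [← Set.union_sdiff_cancel hE₀]
  exact dense_apsp_graph_accuracy_general (fun e he => hU e he.1 he.2)
    (zero_lt_one.trans_le hc).ne' ENNReal.ofReal_ne_top hH₀
    (fun e he => (hHF e he.1 he.2).trans (le_mul_of_one_le_left' hc)) hs ht
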